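/- Let 0<u_-<u_+<1 and let (a,b) be a bounded interval. Then the boundary value problem u'' − (u(1−u))' = 0 on (a,b), u(a)=u_-, u(b)=u_+, admits a unique solution ū_{a,b} with values in (0,1); this solution is strictly increasing, satisfies the first-order equation u' = u(1−u) − J_{a,b}, where J_{a,b} is the unique constant with ∫_{u_-}^{u_+} dr/(r(1−r)−J_{a,b}) = b−a, and is given explicitly by ū_{a,b}(x) = 1/2 + A_{a,b} tanh(A_{a,b}(x−x_{a,b})), where A_{a,b} = (1/4 − J_{a,b})^{1/2} and x_{a,b} ∈ ℝ is determined by the condition ū_{a,b}(a)=u_-. -/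

import Mathlib

/-!
Solutions of the second-order equation are, by one integration, the solutions of
`u' = u (1 - u) - K` for some constant `K`, that is `u' = A² - (u - 1/2)²` with `A² = 1/4 - K`.

*Existence.* The profile `1/2 + A tanh (A (x - x₀))` solves this equation for every `A` and `x₀`.
The data can be matched at both ends exactly when `tanh (A (b - a))` equals the
value forced by the addition formula for `tanh`; with `q < p` the shifted boundary values, this is
a root of `A ↦ (A² - p q) tanh (A (b - a)) - A (p - q)`, found by the intermediate value theorem
(`exists_amplitude`). Substituting `r = u x` in `∫ dr / (r (1 - r) - J)` gives the value `b - a`.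

*Uniqueness of `J`.* If `r (1 - r) - J'` vanishes somewhere on `[u₋, u₊]`, its inverse is not
integrable and the Bochner integral is `0` by convention. Otherwise it has constant
sign: a negative sign gives a negative integral, and on the range of `J'` with
positive sign the integral is strictly increasing in `J'` (`current_unique`).

*Uniqueness of `u`.* The difference `w = v - u` of two solutions with constants `K` and `J`
satisfies the linear equation `w' = (1 - u - v) w + (J - K)`. With `P' = 1 - u - v`, the function
`w exp (-P)` has derivative `(J - K) exp (-P)`, of constant sign. As `w` vanishes at both endpoints,
this forces `J = K` and `w = 0` (`eq_of_first_order`); no a priori information on the sign of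
`v'` is needed.
-/

open MeasureTheory Real Filter Topology Set

/-! ### The hyperbolic tangent -/

lemma tanh_add_formula (x y : ℝ) :
    Real.tanh (x + y) = (Real.tanh x + Real.tanh y) / (1 + Real.tanh x * Real.tanh y) := by
  have hx := Real.cosh_pos x
  have hy := Real.cosh_pos y
  simp only [Real.tanh_eq_sinh_div_cosh, Real.sinh_add, Real.cosh_add]
  have h : (Real.sinh x / Real.cosh x + Real.sinh y / Real.cosh y)
      / (1 + Real.sinh x / Real.cosh x * (Real.sinh y / Real.cosh y))
      = ((Real.sinh x * Real.cosh y + Real.cosh x * Real.sinh y) / (Real.cosh x * Real.cosh y))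
      / ((Real.cosh x * Real.cosh y + Real.sinh x * Real.sinh y)
        / (Real.cosh x * Real.cosh y)) := by
    congr 1 <;> field_simp
  rw [h, div_div_div_cancel_right₀ (by positivity)]

lemma hasDerivAt_tanh_real (x : ℝ) : HasDerivAt Real.tanh (1 - Real.tanh x ^ 2) x := by
  have hx := Real.cosh_pos x
  have h := (Real.hasDerivAt_sinh x).div (Real.hasDerivAt_cosh x) hx.ne'
  have e : Real.tanh = Real.sinh / Real.cosh := by
    funext y; exact Real.tanh_eq_sinh_div_cosh y
  rw [e]
  refine h.congr_deriv ?_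
  simp only [Pi.div_apply]
  field_simp

lemma half_le_tanh {x : ℝ} (hx : 1 ≤ x) : 1 / 2 ≤ Real.tanh x := by
  have h1 := Real.add_one_le_exp x
  have hp := Real.exp_pos (-x)
  have h3 : Real.exp x * Real.exp (-x) = 1 := by rw [← Real.exp_add]; simp
  rw [Real.tanh_eq, div_le_div_iff₀ (by norm_num) (by positivity)]
  nlinarith

/-! ### The profile through the boundary values -/

/-- The amplitude matching both boundary values. The equation is the addition formula for
`tanh (A * L)` with the denominators cleared, so that the left side is continuous in `A`. -/
lemma exists_amplitude {p q L : ℝ} (hqp : q < p) (hL : 0 < L) :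
    ∃ A : ℝ, |p| < A ∧ |q| < A ∧ (A ^ 2 - p * q) * Real.tanh (A * L) = A * (p - q) := by
  set m := max |p| |q| with hm
  have hpm : |p| ≤ m := le_max_left _ _
  have hqm : |q| ≤ m := le_max_right _ _
  -- `M` is large enough that `tanh (M * L) ≥ 1/2` and `M² - p q ≥ 2 M (p - q)`.
  set M := 5 * m + 1 / L with hM
  have hm0 : 0 ≤ m := (abs_nonneg p).trans hpm
  have hLi : 0 < 1 / L := by positivity
  have hmM : m ≤ M := by linarith
  have hcont : Continuous fun A : ℝ => (A ^ 2 - p * q) * Real.tanh (A * L) - A * (p - q) := by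
    have ht : Continuous Real.tanh :=
      continuous_iff_continuousAt.2 fun x => (hasDerivAt_tanh_real x).continuousAt
    fun_prop
  have hlow : (m ^ 2 - p * q) * Real.tanh (m * L) - m * (p - q) < 0 := by
    have ht := Real.tanh_lt_one (m * L)
    have hp1 := le_abs_self p
    have hp2 := neg_abs_le p
    have hq1 := le_abs_self q
    have hq2 := neg_abs_le q
    have key : (m = p ∨ m = -q) ∧ 0 < m := by
      rcases max_choice |p| |q| with h | h <;> rw [← hm] at h
      · rcases abs_cases p with h' | h'
        · exact ⟨Or.inl (by linarith), by grind⟩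
        · exact absurd hqm (by grind)
      · rcases abs_cases q with h' | h'
        · exact absurd hpm (by grind)
        · exact ⟨Or.inr (by linarith), by grind⟩
    obtain ⟨hc, h0⟩ := key
    have hfac : m ^ 2 - p * q = m * (p - q) := by
      rcases hc with h | h
      · rw [h]; ring
      · have : q = -m := by linarith
        rw [this]; ring
    rw [hfac]
    have : 0 < m * (p - q) := mul_pos h0 (by linarith)
    nlinarith
  have hhigh : 0 ≤ (M ^ 2 - p * q) * Real.tanh (M * L) - M * (p - q) := by
    have ht : 1 / 2 ≤ Real.tanh (M * L) := by
      apply half_le_tanh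
      have : 1 / L * L = 1 := by field_simp
      nlinarith [mul_nonneg hm0 hL.le]
    have hpq : p * q ≤ m * m :=
      (le_abs_self _).trans (by rw [abs_mul]; exact mul_le_mul hpm hqm (abs_nonneg _) hm0)
    have hd : p - q ≤ 2 * m := by linarith [le_abs_self p, neg_abs_le q]
    have h5 : 5 * m ≤ M := by linarith
    have hMd : M * (p - q) ≤ M * (2 * m) := mul_le_mul_of_nonneg_left hd (by linarith)
    have hM2 : 0 ≤ M ^ 2 - p * q - 2 * (M * (2 * m)) := by nlinarith
    have hMm : 0 ≤ M * (2 * m) := mul_nonneg (by linarith) (by linarith)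
    have hprod := mul_nonneg (show 0 ≤ M ^ 2 - p * q by linarith) (sub_nonneg.2 ht)
    linarith
  obtain ⟨A, hA, hA0⟩ := intermediate_value_Icc hmM hcont.continuousOn ⟨hlow.le, hhigh⟩
  have hAm : m < A := lt_of_le_of_ne hA.1 (by rintro rfl; simp only at hA0; linarith)
  exact ⟨A, hpm.trans_lt hAm, hqm.trans_lt hAm, by simp only at hA0; linarith⟩

/-- The `tanh` profile through the boundary values. -/
lemma exists_profile {um up a b : ℝ} (h1 : um < up) (hab : a < b) :
    ∃ A x0 : ℝ, 0 < A ∧ |um - 1 / 2| < A ∧ |up - 1 / 2| < A ∧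
      1 / 2 + A * Real.tanh (A * (a - x0)) = um ∧ 1 / 2 + A * Real.tanh (A * (b - x0)) = up := by
  obtain ⟨A, hp, hq, hA⟩ := exists_amplitude (p := up - 1 / 2) (q := um - 1 / 2) (L := b - a)
    (by linarith) (by linarith)
  set p := up - 1 / 2 with hpdef
  set q := um - 1 / 2 with hqdef
  have hA0 : 0 < A := (abs_nonneg p).trans_lt hp
  have hp' := abs_lt.1 hp
  have hq' := abs_lt.1 hq
  have hqA : q / A ∈ Ioo (-1 : ℝ) 1 := by
    constructor
    · rw [lt_div_iff₀ hA0]; linarith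
    · rw [div_lt_iff₀ hA0]; linarith
  have hs := Real.tanh_artanh hqA
  have ea : A * (a - (a - Real.artanh (q / A) / A)) = Real.artanh (q / A) := by
    field_simp; ring
  have eb : A * (b - (a - Real.artanh (q / A) / A))
      = A * (b - a) + Real.artanh (q / A) := by
    field_simp; ring
  refine ⟨A, a - Real.artanh (q / A) / A, hA0, hq, hp, ?_, ?_⟩
  · rw [ea, hs]; field_simp; linarith
  · rw [eb, tanh_add_formula, hs]
    have hd : 0 < A ^ 2 - p * q := by nlinarith
    have hT : Real.tanh (A * (b - a)) = A * (p - q) / (A ^ 2 - p * q) := by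
      rw [eq_div_iff hd.ne']; linarith
    have hq2 : 0 < A ^ 2 - q ^ 2 := by nlinarith
    have hden : 1 + A * (p - q) / (A ^ 2 - p * q) * (q / A)
        = (A ^ 2 - q ^ 2) / (A ^ 2 - p * q) := by
      field_simp; ring
    have hnum : A * (p - q) / (A ^ 2 - p * q) + q / A
        = p * (A ^ 2 - q ^ 2) / (A * (A ^ 2 - p * q)) := by
      field_simp; ring
    rw [hT, hden, hnum]
    field_simp
    linarith

/-! ### The current determined by the integral condition -/

/-- Near a zero `c` of `r (1 - r) - J`, the inverse dominates `(r - c)⁻¹`, because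
`r (1 - r) - J = (r - c) (1 - r - c)` there and `1 - r - c` is bounded. -/
lemma not_integrable_of_root {um up c J : ℝ} (h1 : um < up) (hc : c ∈ Icc um up)
    (hJ : c * (1 - c) - J = 0) :
    ¬ IntervalIntegrable (fun r => (r * (1 - r) - J)⁻¹) volume um up := by
  refine not_intervalIntegrable_of_sub_inv_isBigO_punctured (c := c) ?_ h1.ne
    (by rwa [uIcc_of_le h1.le])
  apply Asymptotics.IsBigO.of_bound (2 + |1 - 2 * c|)
  have hne : ∀ᶠ r in 𝓝[≠] c, 1 - r - c ≠ 0 := by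
    by_cases h : c = 1 - c
    · filter_upwards [self_mem_nhdsWithin] with r hr h'
      exact hr (by simp only [mem_singleton_iff]; linarith)
    · filter_upwards [eventually_nhdsWithin_of_eventually_nhds (eventually_ne_nhds h)] with r hr h'
      exact hr (by linarith)
  have hball : ∀ᶠ r in 𝓝[≠] c, |r - c| < 1 :=
    eventually_nhdsWithin_of_eventually_nhds (by
      filter_upwards [Metric.ball_mem_nhds c one_pos] with r hr
      simpa [Real.dist_eq] using hr)
  filter_upwards [hne, hball] with r hr hb
  have hfac : r * (1 - r) - J = (r - c) * (1 - r - c) := by linarith [hJ]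
  rw [hfac, mul_inv, norm_mul, mul_left_comm]
  refine le_mul_of_one_le_right (norm_nonneg _) ?_
  rw [norm_inv, Real.norm_eq_abs, ← div_eq_mul_inv, one_le_div (abs_pos.2 hr)]
  have : |1 - r - c| ≤ |1 - 2 * c| + |r - c| := by
    have e : 1 - r - c = (1 - 2 * c) - (r - c) := by ring
    rw [e]; exact abs_sub _ _
  linarith

/-- A positive value of the integral forces `J` below the flux: a zero of the denominator makes the
integral take the junk value `0`, and a negative denominator makes it nonpositive. -/
lemma flux_pos_of_integral_pos {um up J : ℝ} (h1 : um < up)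
    (h : 0 < ∫ r in um..up, (r * (1 - r) - J)⁻¹) :
    ∀ r ∈ Icc um up, 0 < r * (1 - r) - J := by
  have hz : ∀ r ∈ Icc um up, r * (1 - r) - J ≠ 0 := fun r hr h0 => by
    rw [intervalIntegral.integral_undef (not_integrable_of_root h1 hr h0)] at h
    exact h.false
  have hcont : ContinuousOn (fun r : ℝ => r * (1 - r) - J) (Icc um up) := by fun_prop
  by_contra! hcon
  obtain ⟨s, hs, hs0⟩ := hcon
  have hneg : ∀ r ∈ Icc um up, r * (1 - r) - J ≤ 0 := by
    intro r hr
    by_contra! hr0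
    obtain ⟨t, ht, ht0⟩ := isPreconnected_Icc.intermediate_value hs hr hcont ⟨hs0, hr0.le⟩
    exact hz t ht ht0
  have := intervalIntegral.integral_nonneg (f := fun r => -(r * (1 - r) - J)⁻¹) (μ := volume) h1.le
    (fun r hr => by simpa using hneg r hr)
  rw [intervalIntegral.integral_neg] at this
  linarith

lemma integral_lt_of_lt {um up J K : ℝ} (h1 : um < up) (hJK : J < K)
    (hK : ∀ r ∈ Icc um up, 0 < r * (1 - r) - K) :
    (∫ r in um..up, (r * (1 - r) - J)⁻¹) < ∫ r in um..up, (r * (1 - r) - K)⁻¹ := by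
  have hlt : ∀ r ∈ Icc um up, (r * (1 - r) - J)⁻¹ < (r * (1 - r) - K)⁻¹ := fun r hr =>
    inv_strictAnti₀ (hK r hr) (by linarith)
  refine intervalIntegral.integral_lt_integral_of_continuousOn_of_le_of_exists_lt h1 ?_ ?_
    (fun r hr => (hlt r (Ioc_subset_Icc_self hr)).le)
    ⟨um, left_mem_Icc.2 h1.le, hlt um (left_mem_Icc.2 h1.le)⟩
  · exact ContinuousOn.inv₀ (by fun_prop) fun r hr => by have := hK r hr; linarith
  · exact ContinuousOn.inv₀ (by fun_prop) fun r hr => (hK r hr).ne'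

lemma current_unique {um up J K L : ℝ} (h1 : um < up) (hL : 0 < L)
    (hJ : (∫ r in um..up, (r * (1 - r) - J)⁻¹) = L)
    (hK : (∫ r in um..up, (r * (1 - r) - K)⁻¹) = L) : J = K := by
  rcases lt_trichotomy J K with h | h | h
  · have := integral_lt_of_lt h1 h (flux_pos_of_integral_pos h1 (by rw [hK]; exact hL))
    linarith
  · exact h
  · have := integral_lt_of_lt h1 h (flux_pos_of_integral_pos h1 (by rw [hJ]; exact hL))
    linarith

/-! ### Comparison for the first-order equation -/

/-- For two solutions of the first-order equation, the difference times the integrating factor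
`exp (-P)`, where `P' = 1 - u - v`, has derivative of the sign of `J - K`. -/
lemma exists_integrating_factor {u v : ℝ → ℝ} {a b J K : ℝ} (hab : a < b)
    (hu : ContinuousOn u (Icc a b)) (hv : ContinuousOn v (Icc a b))
    (hu' : ∀ x ∈ Ioo a b, HasDerivAt u (u x * (1 - u x) - J) x)
    (hv' : ∀ x ∈ Ioo a b, HasDerivAt v (v x * (1 - v x) - K) x) :
    ∃ P : ℝ → ℝ, ContinuousOn (fun x => (v x - u x) * Real.exp (-P x)) (Icc a b) ∧
      ∀ x ∈ Ioo a b, HasDerivAt (fun x => (v x - u x) * Real.exp (-P x))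
        ((J - K) * Real.exp (-P x)) x := by
  have hc : ContinuousOn (fun x => 1 - u x - v x) (Icc a b) := by fun_prop
  -- Extending the coefficient to a continuous function on the line gives a global antiderivative.
  have hg : Continuous (IccExtend hab.le ((Icc a b).domRestrict fun x => 1 - u x - v x)) :=
    (continuousOn_iff_continuous_domRestrict.1 hc).Icc_extend'
  set g := IccExtend hab.le ((Icc a b).domRestrict fun x => 1 - u x - v x) with hgdef
  have hgx : ∀ x ∈ Icc a b, g x = 1 - u x - v x := fun x hx => by
    rw [hgdef, IccExtend_of_mem _ _ hx]; rfl
  have hP : ∀ x, HasDerivAt (fun x => ∫ t in a..x, g t) (g x) x := fun x =>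
    (hg.integral_hasStrictDerivAt a x).hasDerivAt
  have hPc : Continuous fun x => ∫ t in a..x, g t :=
    continuous_iff_continuousAt.2 fun x => (hP x).continuousAt
  refine ⟨fun x => ∫ t in a..x, g t, by fun_prop, fun x hx => ?_⟩
  refine (((hv' x hx).sub (hu' x hx)).mul (hP x).neg.exp).congr_deriv ?_
  rw [hgx x (Ioo_subset_Icc_self hx), Pi.sub_apply, Pi.neg_apply]
  ring

lemma first_order_lt {u v : ℝ → ℝ} {a b J K : ℝ} (hab : a < b)
    (hu : ContinuousOn u (Icc a b)) (hv : ContinuousOn v (Icc a b))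
    (hu' : ∀ x ∈ Ioo a b, HasDerivAt u (u x * (1 - u x) - J) x)
    (hv' : ∀ x ∈ Ioo a b, HasDerivAt v (v x * (1 - v x) - K) x)
    (ha : v a = u a) (hKJ : K < J) : u b < v b := by
  obtain ⟨P, hPc, hP⟩ := exists_integrating_factor hab hu hv hu' hv'
  have hm := strictMonoOn_of_deriv_pos (convex_Icc a b) hPc (fun x hx => by
    rw [interior_Icc] at hx
    rw [(hP x hx).deriv]
    exact mul_pos (by linarith) (Real.exp_pos _))
  have := hm (left_mem_Icc.2 hab.le) (right_mem_Icc.2 hab.le) hab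
  simp only [ha, sub_self, zero_mul] at this
  have := pos_of_mul_pos_left this (Real.exp_pos _).le
  linarith

lemma first_order_le {u v : ℝ → ℝ} {a b J : ℝ} (hab : a < b)
    (hu : ContinuousOn u (Icc a b)) (hv : ContinuousOn v (Icc a b))
    (hu' : ∀ x ∈ Ioo a b, HasDerivAt u (u x * (1 - u x) - J) x)
    (hv' : ∀ x ∈ Ioo a b, HasDerivAt v (v x * (1 - v x) - J) x)
    (ha : v a = u a) : ∀ x ∈ Icc a b, u x ≤ v x := by
  obtain ⟨P, hPc, hP⟩ := exists_integrating_factor hab hu hv hu' hv'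
  have hm := monotoneOn_of_deriv_nonneg (convex_Icc a b) hPc
    (fun x hx => by
      rw [interior_Icc] at hx
      exact (hP x hx).differentiableAt.differentiableWithinAt)
    (fun x hx => by
      rw [interior_Icc] at hx
      rw [(hP x hx).deriv]
      simp)
  intro x hx
  have := hm (left_mem_Icc.2 hab.le) hx hx.1
  simp only [ha, sub_self, zero_mul] at this
  have := nonneg_of_mul_nonneg_left this (Real.exp_pos _)
  linarith

/-- The constants `J` and `K` may differ a priori: equal values at both endpoints force `J = K` by
`first_order_lt`, and then `v = u`. -/
lemma eq_of_first_order {u v : ℝ → ℝ} {a b J K : ℝ} (hab : a < b)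
    (hu : ContinuousOn u (Icc a b)) (hv : ContinuousOn v (Icc a b))
    (hu' : ∀ x ∈ Ioo a b, HasDerivAt u (u x * (1 - u x) - J) x)
    (hv' : ∀ x ∈ Ioo a b, HasDerivAt v (v x * (1 - v x) - K) x)
    (ha : v a = u a) (hb : v b = u b) : ∀ x ∈ Icc a b, v x = u x := by
  rcases lt_trichotomy J K with h | h | h
  · exact absurd (first_order_lt hab hv hu hv' hu' ha.symm h) (by rw [hb]; exact lt_irrefl _)
  · subst h
    exact fun x hx => le_antisymm (first_order_le hab hv hu hv' hu' ha.symm x hx)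
      (first_order_le hab hu hv hu' hv' ha x hx)
  · exact absurd (first_order_lt hab hu hv hu' hv' ha h) (by rw [hb]; exact lt_irrefl _)

/-- Once-integrated form of the second-order equation. -/
lemma exists_current {v : ℝ → ℝ} {a b : ℝ}
    (hv : ∀ x ∈ Ioo a b, DifferentiableAt ℝ v x ∧ DifferentiableAt ℝ (deriv v) x ∧
      deriv (deriv v) x = deriv (fun y => v y * (1 - v y)) x) :
    ∃ K : ℝ, ∀ x ∈ Ioo a b, HasDerivAt v (v x * (1 - v x) - K) x := by
  have hf : ∀ x ∈ Ioo a b, DifferentiableAt ℝ (fun y => v y * (1 - v y)) x := fun x hx =>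
    (hv x hx).1.mul ((hv x hx).1.const_sub 1)
  obtain ⟨K, hK⟩ := isOpen_Ioo.exists_is_const_of_deriv_eq_zero (s := Ioo a b)
    (f := fun x => v x * (1 - v x) - deriv v x) isPreconnected_Ioo
    (fun x hx => ((hf x hx).sub (hv x hx).2.1).differentiableWithinAt)
    (fun x hx => by
      rw [deriv_fun_sub (hf x hx) (hv x hx).2.1, (hv x hx).2.2, sub_self]; rfl)
  refine ⟨K, fun x hx => (hv x hx).1.hasDerivAt.congr_deriv ?_⟩
  have := hK x hx
  linarith

/-! ### The boundary value problem -/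

/-- For `0 < u₋ < u₊ < 1` and a bounded interval `(a,b)`, the boundary value
problem `u'' - (u(1-u))' = 0`, `u(a) = u₋`, `u(b) = u₊` has a unique solution with values in
`(0,1)`; it is strictly increasing, satisfies `u' = u(1-u) - J` where `J` is the unique constant
with `∫_{u₋}^{u₊} dr/(r(1-r) - J) = b - a`, and is explicitly a shifted `tanh` profile. -/
theorem stmt_0 (um up a b : ℝ) (h0 : 0 < um) (h1 : um < up) (h2 : up < 1) (hab : a < b) :
    ∃ u : ℝ → ℝ,
      -- u solves the boundary value problem with values in (0,1)
      (ContinuousOn u (Icc a b) ∧ u a = um ∧ u b = up ∧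
        (∀ x ∈ Ioo a b, u x ∈ Ioo (0:ℝ) 1) ∧
        (∀ x ∈ Ioo a b, DifferentiableAt ℝ u x ∧ DifferentiableAt ℝ (deriv u) x ∧
          deriv (deriv u) x = deriv (fun y => u y * (1 - u y)) x)) ∧
      -- u is strictly increasing
      StrictMonoOn u (Icc a b) ∧
      -- first-order equation with the current J, uniquely determined by the integral condition
      (∃ J : ℝ,
        (∀ x ∈ Ioo a b, deriv u x = u x * (1 - u x) - J) ∧
        (∫ r in um..up, (r * (1 - r) - J)⁻¹) = b - a ∧
        (∀ J' : ℝ, (∫ r in um..up, (r * (1 - r) - J')⁻¹) = b - a → J' = J) ∧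
        -- explicit tanh profile, with x₀ determined by u(a) = u₋
        (∃ x0 : ℝ, ∀ x ∈ Icc a b,
          u x = 1/2 + Real.sqrt (1/4 - J) * Real.tanh (Real.sqrt (1/4 - J) * (x - x0)))) ∧
      -- uniqueness of the solution to the boundary value problem
      (∀ v : ℝ → ℝ,
        (ContinuousOn v (Icc a b) ∧ v a = um ∧ v b = up ∧
          (∀ x ∈ Ioo a b, v x ∈ Ioo (0:ℝ) 1) ∧
          (∀ x ∈ Ioo a b, DifferentiableAt ℝ v x ∧ DifferentiableAt ℝ (deriv v) x ∧
            deriv (deriv v) x = deriv (fun y => v y * (1 - v y)) x)) →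
        ∀ x ∈ Icc a b, v x = u x) := by
  obtain ⟨A, x0, hA, hq, hp, hua, hub⟩ := exists_profile h1 hab
  set u : ℝ → ℝ := fun x => 1 / 2 + A * Real.tanh (A * (x - x0)) with hu
  set J : ℝ := 1 / 4 - A ^ 2 with hJ
  have hsqrt : Real.sqrt (1 / 4 - J) = A := by
    rw [hJ, sub_sub_cancel, Real.sqrt_sq hA.le]
  have hder : ∀ x, HasDerivAt u (u x * (1 - u x) - J) x := fun x => by
    have hin : HasDerivAt (fun x : ℝ => A * (x - x0)) A x := by
      simpa using ((hasDerivAt_id x).sub_const x0).const_mul A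
    have h := (((hasDerivAt_tanh_real (A * (x - x0))).comp x hin).const_mul A).const_add (1 / 2)
    refine h.congr_deriv ?_
    simp only [hu, hJ]
    ring
  have hcont : Continuous u := continuous_iff_continuousAt.2 fun x => (hder x).continuousAt
  have hderiv : deriv u = fun x => u x * (1 - u x) - J := funext fun x => (hder x).deriv
  have hpos : ∀ x, 0 < u x * (1 - u x) - J := fun x => by
    have e : u x * (1 - u x) - J = A ^ 2 * (1 - Real.tanh (A * (x - x0)) ^ 2) := by
      simp only [hu, hJ]; ring
    rw [e]
    have ht1 := Real.tanh_lt_one (A * (x - x0))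
    have ht2 := Real.neg_one_lt_tanh (A * (x - x0))
    exact mul_pos (by positivity) (by nlinarith)
  have hmono : StrictMono u := strictMono_of_deriv_pos fun x => by rw [hderiv]; exact hpos x
  have hint : (∫ r in um..up, (r * (1 - r) - J)⁻¹) = b - a := by
    have h := intervalIntegral.integral_comp_mul_deriv'' (a := a) (b := b) (f := u)
      (f' := fun x => u x * (1 - u x) - J) (g := fun r => (r * (1 - r) - J)⁻¹)
      hcont.continuousOn (fun x _ => (hder x).hasDerivWithinAt) (by fun_prop)
      (ContinuousOn.inv₀ (by fun_prop) (by rintro _ ⟨x, -, rfl⟩; exact (hpos x).ne'))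
    have h1 : ∀ x, ((fun r => (r * (1 - r) - J)⁻¹) ∘ u) x * (u x * (1 - u x) - J) = 1 :=
      fun x => inv_mul_cancel₀ (hpos x).ne'
    rw [show u a = um from hua, show u b = up from hub] at h
    rw [← h, intervalIntegral.integral_congr (g := fun _ => (1 : ℝ)) (fun x _ => h1 x)]
    simp
  refine ⟨u, ⟨hcont.continuousOn, hua, hub, fun x hx => ?_, fun x _ => ?_⟩,
    hmono.strictMonoOn _, ⟨J, fun x _ => (hder x).deriv, hint, fun J' hJ' =>
      current_unique h1 (sub_pos.2 hab) hJ' hint, x0, fun x _ => by rw [hsqrt]⟩, ?_⟩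
  · have h3 := hmono hx.1
    have h4 := hmono hx.2
    rw [show u a = um from hua] at h3
    rw [show u b = up from hub] at h4
    exact ⟨by linarith, by linarith⟩
  · have hd := (hder x).differentiableAt
    have hf : DifferentiableAt ℝ (fun y => u y * (1 - u y)) x := hd.mul (hd.const_sub 1)
    refine ⟨hd, ?_, ?_⟩
    · rw [hderiv]; exact hf.sub_const J
    · rw [hderiv, deriv_sub_const]
  · rintro v ⟨hvc, hva, hvb, -, hv⟩
    obtain ⟨K, hK⟩ := exists_current hv
    exact eq_of_first_order hab hcont.continuousOn hvc (fun x _ => hder x) hK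
      (hva.trans hua.symm) (hvb.trans hub.symm)
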